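/- Suppose d = 2. Then for every orthonormal basis {a'_1, a'_2} of H, the state-independent overall error satisfies Δ(𝒜,𝒜',ℬ) ≥ η(𝒜,ℬ), where η(𝒜,ℬ) = |⟨a_1, b_1⟩| · √(1 − |⟨a_1, b_1⟩|²). -/

import Mathlib

/-!
Work with `q v = ⟪v, ρ v⟫`, the probability of the outcome `v` in the state `ρ`.

In the basis `a` the operator `distOp a b i` has zero diagonal, so its expectation in `ρ` only sees
the coherence `⟪a 0, ρ (a 1)⟫`, whose modulus is at most `1/2` (`IsDensity.abs_coherence_le`).
Hence every state is disturbed by at most `s = |⟪a 0, b 0⟫|·√(1 - |⟪a 0, b 0⟫|²)` (`sdDist_le`).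

An equal superposition of `a 0` and `a 1` with a suitable relative phase (`exists_density`)
satisfies `q (a 0) = q (a 1) = 1/2` and `q (b 0) = 1/2 + s`, which attains the bound. The same state
gives the trade-off: with `p = q (a' 0)` and `c = |⟪a' 0, b 0⟫|²`, its error is at least
`|1/2 - p|` and its disturbance at least `|s - (2c - 1)(p - 1/2)| ≥ s - |1/2 - p|`.
-/

open scoped ComplexInnerProductSpace

noncomputable section

variable {H : Type*} [NormedAddCommGroup H] [InnerProductSpace ℂ H] [FiniteDimensional ℂ H]
variable {ι ι' : Type*} [Fintype ι] [Fintype ι']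

/-- The rank-one projector `|v⟩⟨v|`. -/
def ketbra (v : H) : H →ₗ[ℂ] H where
  toFun x := ⟪v, x⟫ • v
  map_add' x y := by simp [inner_add_right, add_smul]
  map_smul' c x := by simp [inner_smul_right, mul_smul]

/-- A density operator: self-adjoint, positive semidefinite, trace one. -/
def IsDensity (ρ : H →ₗ[ℂ] H) : Prop :=
  LinearMap.IsSymmetric ρ ∧ (∀ x : H, 0 ≤ (⟪x, ρ x⟫).re) ∧
    LinearMap.trace ℂ H ρ = 1

/-- The state-dependent error `ε_ρ(𝒜,𝒜')`. -/
def sdError (a a' : ι → H) (ρ : H →ₗ[ℂ] H) : ℝ :=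
  ⨆ i : ι, ‖LinearMap.trace ℂ H (ρ ∘ₗ (ketbra (a i) - ketbra (a' i)))‖

/-- The state-independent error `ε(𝒜,𝒜')`. -/
def siError (a a' : ι → H) : ℝ :=
  ⨆ ρ : {ρ : H →ₗ[ℂ] H // IsDensity ρ}, sdError a a' ρ.1

/-- The operator `|b_i⟩⟨b_i| − Σ_j |⟨a'_j, b_i⟩|² |a'_j⟩⟨a'_j|`. -/
def distOp (a' : ι' → H) (b : ι → H) (i : ι) : H →ₗ[ℂ] H :=
  ketbra (b i) - ∑ j : ι', (‖⟪a' j, b i⟫‖ ^ 2 : ℂ) • ketbra (a' j)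

/-- The state-dependent disturbance `η_ρ(𝒜',ℬ)`. -/
def sdDist (a' : ι' → H) (b : ι → H) (ρ : H →ₗ[ℂ] H) : ℝ :=
  ⨆ i : ι, ‖LinearMap.trace ℂ H (ρ ∘ₗ distOp a' b i)‖

/-- The state-independent disturbance `η(𝒜',ℬ)`. -/
def siDist (a' : ι' → H) (b : ι → H) : ℝ :=
  ⨆ ρ : {ρ : H →ₗ[ℂ] H // IsDensity ρ}, sdDist a' b ρ.1

/-- The state-independent overall error `Δ(𝒜,𝒜',ℬ)`. -/
def siOverall (a a' b : ι → H) : ℝ :=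
  ⨆ ρ : {ρ : H →ₗ[ℂ] H // IsDensity ρ}, (sdError a a' ρ.1 + sdDist a' b ρ.1)

/-- The trace pairing with a projector is an expectation value; the basis `a` only serves to
compute the trace. -/
theorem trace_comp_ketbra (a : OrthonormalBasis (Fin 2) ℂ H) (ρ : H →ₗ[ℂ] H) (v : H) :
    LinearMap.trace ℂ H (ρ ∘ₗ ketbra v) = ⟪v, ρ v⟫ := by
  rw [LinearMap.trace_eq_sum_inner _ a]
  conv_rhs => rw [← a.sum_inner_mul_inner]
  simp [ketbra, inner_smul_right]

/-- Expectation values of a self-adjoint operator are real. -/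
theorem IsDensity.apply_eq {ρ : H →ₗ[ℂ] H} (h : IsDensity ρ) (v : H) :
    ⟪v, ρ v⟫ = ((⟪v, ρ v⟫).re : ℂ) := by
  refine (Complex.conj_eq_iff_re.1 ?_).symm
  rw [inner_conj_symm]
  exact h.1 v v

theorem IsDensity.sum_eq {ρ : H →ₗ[ℂ] H} (h : IsDensity ρ)
    (a : OrthonormalBasis (Fin 2) ℂ H) :
    (⟪a 0, ρ (a 0)⟫).re + (⟪a 1, ρ (a 1)⟫).re = 1 := by
  have := h.2.2
  rw [LinearMap.trace_eq_sum_inner _ a, Fin.sum_univ_two] at this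
  simpa using congrArg Complex.re this

theorem trace_distOp (a : OrthonormalBasis (Fin 2) ℂ H) (b : Fin 2 → H) (ρ : H →ₗ[ℂ] H)
    (h : IsDensity ρ) (i : Fin 2) :
    LinearMap.trace ℂ H (ρ ∘ₗ distOp (⇑a) b i) =
      (((⟪b i, ρ (b i)⟫).re - (‖⟪a 0, b i⟫‖ ^ 2 * (⟪a 0, ρ (a 0)⟫).re
        + ‖⟪a 1, b i⟫‖ ^ 2 * (⟪a 1, ρ (a 1)⟫).re) : ℝ) : ℂ) := by
  simp only [distOp, LinearMap.comp_sub, map_sub, Fin.sum_univ_two, LinearMap.comp_add,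
    LinearMap.comp_smul, map_add, map_smul, trace_comp_ketbra a, smul_eq_mul]
  push_cast
  rw [← h.apply_eq, ← h.apply_eq, ← h.apply_eq]

theorem trace_errOp (a a' : OrthonormalBasis (Fin 2) ℂ H) (ρ : H →ₗ[ℂ] H)
    (h : IsDensity ρ) (i : Fin 2) :
    LinearMap.trace ℂ H (ρ ∘ₗ (ketbra (a i) - ketbra (a' i))) =
      (((⟪a i, ρ (a i)⟫).re - (⟪a' i, ρ (a' i)⟫).re : ℝ) : ℂ) := by
  simp only [LinearMap.comp_sub, map_sub, trace_comp_ketbra a]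
  push_cast
  rw [← h.apply_eq, ← h.apply_eq]

theorem IsDensity.expand {ρ : H →ₗ[ℂ] H} (h : IsDensity ρ) (u v : H) (x y : ℂ) :
    (⟪x • u + y • v, ρ (x • u + y • v)⟫).re =
      ‖x‖ ^ 2 * (⟪u, ρ u⟫).re + ‖y‖ ^ 2 * (⟪v, ρ v⟫).re
        + 2 * (starRingEnd ℂ x * y * ⟪u, ρ v⟫).re := by
  have hs : ⟪v, ρ u⟫ = starRingEnd ℂ ⟪u, ρ v⟫ := by
    rw [inner_conj_symm]; exact (h.1 v u).symm
  have e : ⟪x • u + y • v, ρ (x • u + y • v)⟫ =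
      (starRingEnd ℂ x * x) * ⟪u, ρ u⟫ + (starRingEnd ℂ y * y) * ⟪v, ρ v⟫
      + (starRingEnd ℂ x * y * ⟪u, ρ v⟫ +
        starRingEnd ℂ (starRingEnd ℂ x * y * ⟪u, ρ v⟫)) := by
    simp only [map_add, map_smul, inner_add_left, inner_add_right, inner_smul_left,
      inner_smul_right, hs, map_mul, Complex.conj_conj]
    ring
  rw [e, Complex.conj_mul', Complex.conj_mul', h.apply_eq u, h.apply_eq v]
  simp only [Complex.add_re, Complex.conj_re, ← Complex.ofReal_pow, ← Complex.ofReal_mul,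
    Complex.ofReal_re]
  ring

/-- The coherence `⟪a 0, ρ (a 1)⟫` of a state has modulus at most `1/2`, expressed through the real
parts of its multiples. It is positivity of `ρ` on `a 0 ± w • a 1`, where `w` is the phase of `z`. -/
theorem IsDensity.abs_coherence_le {ρ : H →ₗ[ℂ] H} (h : IsDensity ρ)
    (a : OrthonormalBasis (Fin 2) ℂ H) (z : ℂ) :
    |2 * (z * ⟪a 0, ρ (a 1)⟫).re| ≤ ‖z‖ := by
  by_cases hz : z = 0
  · simp [hz]
  have key (w : ℂ) (hw : ‖w‖ = 1) : 0 ≤ 1 + 2 * (w * ⟪a 0, ρ (a 1)⟫).re := by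
    have := h.2.1 ((1 : ℂ) • a 0 + w • a 1)
    rw [h.expand, hw] at this
    have h1 := h.sum_eq a
    simp only [norm_one, map_one, one_mul, one_pow] at this
    linarith
  have hn : 0 < ‖z‖ := norm_pos_iff.2 hz
  have hc : (‖z‖ : ℂ) ≠ 0 := by exact_mod_cast hn.ne'
  have h1 := key (z / ‖z‖) (by simp [hn.ne'])
  have h2 := key (-(z / ‖z‖)) (by simp [hn.ne'])
  have e : (z * ⟪a 0, ρ (a 1)⟫).re = ‖z‖ * (z / ‖z‖ * ⟪a 0, ρ (a 1)⟫).re := by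
    rw [← Complex.re_ofReal_mul]
    congr 1
    field_simp
  rw [neg_mul, Complex.neg_re] at h2
  rw [e, abs_le]
  constructor <;> nlinarith

theorem norm_sq_add (a : OrthonormalBasis (Fin 2) ℂ H) (v : H) (hv : ‖v‖ = 1) :
    ‖⟪a 0, v⟫‖ ^ 2 + ‖⟪a 1, v⟫‖ ^ 2 = 1 := by
  have := a.sum_sq_norm_inner_right v
  rw [Fin.sum_univ_two, hv] at this
  simpa using this

/-- The matrix of squared overlaps of two bases is doubly stochastic, so for `d = 2` the product of
the two moduli `|⟪a j, b i⟫|` does not depend on `i`. -/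
theorem norm_mul_norm (a b : OrthonormalBasis (Fin 2) ℂ H) (i : Fin 2) :
    ‖⟪a 0, b i⟫‖ * ‖⟪a 1, b i⟫‖ = ‖⟪a 0, b 0⟫‖ * Real.sqrt (1 - ‖⟪a 0, b 0⟫‖ ^ 2) := by
  have h0 := norm_sq_add a (b 0) (b.norm_eq_one 0)
  have h1 := norm_sq_add a (b 1) (b.norm_eq_one 1)
  have h2 := norm_sq_add b (a 0) (a.norm_eq_one 0)
  rw [norm_inner_symm (b 0), norm_inner_symm (b 1)] at h2
  have e0 : ‖⟪a 1, b 0⟫‖ = Real.sqrt (1 - ‖⟪a 0, b 0⟫‖ ^ 2) := by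
    rw [← h0, add_sub_cancel_left, Real.sqrt_sq (norm_nonneg _)]
  have e1 : ‖⟪a 0, b 1⟫‖ = Real.sqrt (1 - ‖⟪a 0, b 0⟫‖ ^ 2) := by
    rw [← h2, add_sub_cancel_left, Real.sqrt_sq (norm_nonneg _)]
  have e2 : ‖⟪a 1, b 1⟫‖ = ‖⟪a 0, b 0⟫‖ :=
    (sq_eq_sq₀ (norm_nonneg _) (norm_nonneg _)).1 (by linarith)
  fin_cases i
  · simp [e0]
  · simp [e1, e2, mul_comm]

/-- Every state is disturbed by at most `|⟨a₁,b₁⟩|·√(1-|⟨a₁,b₁⟩|²)`: in the basis `a` the operator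
`distOp a b i` has zero diagonal, so only the coherence of the state contributes. -/
theorem sdDist_le (a b : OrthonormalBasis (Fin 2) ℂ H) (ρ : H →ₗ[ℂ] H) (h : IsDensity ρ) :
    sdDist (⇑a) (⇑b) ρ ≤ ‖⟪a 0, b 0⟫‖ * Real.sqrt (1 - ‖⟪a 0, b 0⟫‖ ^ 2) := by
  refine ciSup_le fun i => ?_
  rw [← norm_mul_norm a b i, trace_distOp a _ ρ h, Complex.norm_real, Real.norm_eq_abs]
  have hb := a.sum_repr' (b i)
  rw [Fin.sum_univ_two] at hb
  have := h.expand (a 0) (a 1) ⟪a 0, b i⟫ ⟪a 1, b i⟫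
  rw [hb] at this
  rw [this, add_sub_cancel_left]
  refine (h.abs_coherence_le a _).trans_eq ?_
  rw [norm_mul, RCLike.norm_conj]

theorem sdError_le (a a' : OrthonormalBasis (Fin 2) ℂ H) (ρ : H →ₗ[ℂ] H) (h : IsDensity ρ) :
    sdError (⇑a) (⇑a') ρ ≤ 1 := by
  refine ciSup_le fun i => ?_
  rw [trace_errOp a a' ρ h, Complex.norm_real, Real.norm_eq_abs]
  have h1 := h.sum_eq a
  have h2 := h.sum_eq a'
  have h3 := fun i => h.2.1 (a i)
  have h4 := fun i => h.2.1 (a' i)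
  have := h3 0; have := h3 1; have := h4 0; have := h4 1
  rw [abs_le]
  fin_cases i <;> constructor <;> simp only [Fin.zero_eta, Fin.mk_one] <;> linarith

/-- A pure state that is unbiased for `a` and whose outcome probability for `b 0` is as large
as this allows: an equal superposition of `a 0` and `a 1` whose relative phase aligns the
amplitudes of `b 0`. -/
theorem exists_density (a b : OrthonormalBasis (Fin 2) ℂ H) :
    ∃ ρ : H →ₗ[ℂ] H, IsDensity ρ ∧ (⟪a 0, ρ (a 0)⟫).re = 1 / 2 ∧ (⟪a 1, ρ (a 1)⟫).re = 1 / 2 ∧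
      (⟪b 0, ρ (b 0)⟫).re = 1 / 2 + ‖⟪a 0, b 0⟫‖ * Real.sqrt (1 - ‖⟪a 0, b 0⟫‖ ^ 2) := by
  obtain ⟨c, hc, hcz⟩ : ∃ c : ℂ, ‖c‖ = 1 ∧
      starRingEnd ℂ ⟪a 0, b 0⟫ * ⟪a 1, b 0⟫ * starRingEnd ℂ c =
        (‖⟪a 0, b 0⟫‖ * ‖⟪a 1, b 0⟫‖ : ℝ) := by
    set z := starRingEnd ℂ ⟪a 0, b 0⟫ * ⟪a 1, b 0⟫ with hz
    have hzn : ‖⟪a 0, b 0⟫‖ * ‖⟪a 1, b 0⟫‖ = ‖z‖ := by rw [hz, norm_mul, RCLike.norm_conj]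
    rw [hzn]
    by_cases h0 : z = 0
    · exact ⟨1, by simp, by simp [h0]⟩
    have hn : ‖z‖ ≠ 0 := norm_ne_zero_iff.2 h0
    have hn' : (‖z‖ : ℂ) ≠ 0 := by exact_mod_cast hn
    refine ⟨z / ‖z‖, by simp [hn], ?_⟩
    rw [map_div₀, Complex.conj_ofReal, mul_div_assoc', Complex.mul_conj']
    field_simp
  have r2 : (Real.sqrt 2)⁻¹ ^ 2 = 1 / 2 := by simp
  set φ : H := ((Real.sqrt 2)⁻¹ : ℂ) • (a 0 + c • a 1) with hφ
  have ha : ∀ i j, ⟪a i, a j⟫ = if i = j then (1 : ℂ) else 0 :=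
    orthonormal_iff_ite.1 a.orthonormal
  have q (v : H) : (⟪v, ketbra φ v⟫) = ((‖⟪φ, v⟫‖ ^ 2 : ℝ) : ℂ) := by
    have : ketbra φ v = ⟪φ, v⟫ • φ := rfl
    rw [this, inner_smul_right, ← inner_conj_symm v φ, Complex.mul_conj']
    push_cast; rfl
  have q0 : (⟪a 0, ketbra φ (a 0)⟫) = ((1 / 2 : ℝ) : ℂ) := by
    rw [q, ← r2]
    simp [hφ, ha]
  have q1 : (⟪a 1, ketbra φ (a 1)⟫) = ((1 / 2 : ℝ) : ℂ) := by
    rw [q, ← r2]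
    simp [hφ, ha, hc]
  have hd : IsDensity (ketbra φ) := by
    refine ⟨fun x y => ?_, fun x => ?_, ?_⟩
    · simp [ketbra, inner_smul_left, inner_smul_right, mul_comm]
    · rw [q, Complex.ofReal_re]; positivity
    · rw [LinearMap.trace_eq_sum_inner _ a, Fin.sum_univ_two, q0, q1]
      norm_num
  refine ⟨ketbra φ, hd, by rw [q0, Complex.ofReal_re], by rw [q1, Complex.ofReal_re], ?_⟩
  have hb := a.sum_repr' (b 0)
  rw [Fin.sum_univ_two] at hb
  have e := hd.expand (a 0) (a 1) ⟪a 0, b 0⟫ ⟪a 1, b 0⟫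
  have q01 : ⟪a 0, ketbra φ (a 1)⟫ = (1 / 2 : ℝ) * starRingEnd ℂ c := by
    have : ketbra φ (a 1) = ⟪φ, a 1⟫ • φ := rfl
    rw [this]
    have r2c : ((Real.sqrt 2 : ℝ) : ℂ)⁻¹ ^ 2 = 1 / 2 := by
      rw [← Complex.ofReal_inv, ← Complex.ofReal_pow, r2]; norm_num
    simp only [hφ, inner_smul_right, inner_smul_left, inner_add_left, inner_add_right, ha]
    simp
    linear_combination starRingEnd ℂ c * r2c
  rw [hb, q0, q1, q01, mul_left_comm, hcz, ← Complex.ofReal_mul, norm_mul_norm a b 0] at e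
  simp only [Complex.ofReal_re] at e
  rw [e]
  linarith [norm_sq_add a (b 0) (b.norm_eq_one 0)]

/-- qubit trade-off for the overall error `Δ(𝒜,𝒜',ℬ) ≥ η(𝒜,ℬ)`,
where `η(𝒜,ℬ) = |⟨a₁,b₁⟩|·√(1-|⟨a₁,b₁⟩|²)`. -/
theorem qubit_overall_error_tradeoff (a b : OrthonormalBasis (Fin 2) ℂ H)
    (a' : OrthonormalBasis (Fin 2) ℂ H) :
    siDist (⇑a) (⇑b) ≤ siOverall (⇑a) (⇑a') (⇑b) ∧
    siDist (⇑a) (⇑b) = ‖⟪a 0, b 0⟫‖ * Real.sqrt (1 - ‖⟪a 0, b 0⟫‖ ^ 2) := by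
  obtain ⟨ρ, h, h0, h1, hb⟩ := exists_density a b
  have n0 := norm_sq_add a (b 0) (b.norm_eq_one 0)
  set s := ‖⟪a 0, b 0⟫‖ * Real.sqrt (1 - ‖⟪a 0, b 0⟫‖ ^ 2) with hs
  have dist_ge (a'' : OrthonormalBasis (Fin 2) ℂ H) :
      |1 / 2 + s - (‖⟪a'' 0, b 0⟫‖ ^ 2 * (⟪a'' 0, ρ (a'' 0)⟫).re
        + ‖⟪a'' 1, b 0⟫‖ ^ 2 * (⟪a'' 1, ρ (a'' 1)⟫).re)| ≤ sdDist (⇑a'') (⇑b) ρ := by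
    have := le_ciSup (Set.finite_range fun i : Fin 2 =>
      ‖LinearMap.trace ℂ H (ρ ∘ₗ distOp (⇑a'') (⇑b) i)‖).bddAbove 0
    refine le_trans (le_of_eq ?_) this
    simp only [trace_distOp a'' _ ρ h, Complex.norm_real, Real.norm_eq_abs, hb]
  have err_ge : |1 / 2 - (⟪a' 0, ρ (a' 0)⟫).re| ≤ sdError (⇑a) (⇑a') ρ := by
    have := le_ciSup (Set.finite_range fun i : Fin 2 =>
      ‖LinearMap.trace ℂ H (ρ ∘ₗ (ketbra (a i) - ketbra (a' i)))‖).bddAbove 0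
    refine le_trans (le_of_eq ?_) this
    simp only [trace_errOp a a' ρ h, Complex.norm_real, Real.norm_eq_abs, h0]
  have : Nonempty {ρ : H →ₗ[ℂ] H // IsDensity ρ} := ⟨⟨ρ, h⟩⟩
  have heq : siDist (⇑a) (⇑b) = s := by
    refine le_antisymm (ciSup_le fun σ => sdDist_le a b σ.1 σ.2) ?_
    refine le_trans ?_ (le_ciSup (f := fun σ : {ρ : H →ₗ[ℂ] H // IsDensity ρ} =>
      sdDist (⇑a) (⇑b) σ.1) ⟨s, ?_⟩ ⟨ρ, h⟩)
    · refine le_trans (le_trans (le_of_eq ?_) (le_abs_self _)) (dist_ge a)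
      rw [h0, h1]
      linarith
    · rintro _ ⟨σ, rfl⟩
      exact sdDist_le a b σ.1 σ.2
  refine ⟨?_, heq⟩
  rw [heq]
  refine le_trans ?_ (le_ciSup (f := fun σ : {ρ : H →ₗ[ℂ] H // IsDensity ρ} =>
      sdError (⇑a) (⇑a') σ.1 + sdDist (⇑a') (⇑b) σ.1)
      ⟨1 + ‖⟪a' 0, b 0⟫‖ * Real.sqrt (1 - ‖⟪a' 0, b 0⟫‖ ^ 2), ?_⟩ ⟨ρ, h⟩)
  · refine le_trans ?_ (add_le_add err_ge (dist_ge a'))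
    have hp := h.sum_eq a'
    have n1 := norm_sq_add a' (b 0) (b.norm_eq_one 0)
    -- With `p` the probability of `a' 0` and `c = |⟪a' 0, b 0⟫|²`, the disturbance is
    -- `|s - (2c - 1)(p - 1/2)|`, and `|2c - 1| ≤ 1`.
    set p := (⟪a' 0, ρ (a' 0)⟫).re
    set c := ‖⟪a' 0, b 0⟫‖ ^ 2
    have hc0 : 0 ≤ c := by positivity
    have hc1 : 0 ≤ ‖⟪a' 1, b 0⟫‖ ^ 2 := by positivity
    rw [show ‖⟪a' 1, b 0⟫‖ ^ 2 = 1 - c by linarith,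
      show (⟪a' 1, ρ (a' 1)⟫).re = 1 - p by linarith]
    have k1 := le_abs_self (1 / 2 + s - (c * p + (1 - c) * (1 - p)))
    have k2 : (2 * c - 1) * (p - 1 / 2) ≤ |1 / 2 - p| := by
      refine (le_abs_self _).trans ?_
      rw [abs_mul, abs_sub_comm p]
      exact mul_le_of_le_one_left (abs_nonneg _) (abs_le.2 ⟨by linarith, by linarith⟩)
    linarith
  · rintro _ ⟨σ, rfl⟩
    exact add_le_add (sdError_le a a' σ.1 σ.2) (sdDist_le a' b σ.1 σ.2)
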